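/- Let 0 < λ₁ < λ₂ < λ₃ and set m = (λ₂² − λ₁²)/(λ₃² − λ₁²). Then the normalization constant w² of the genus-1 condensate density of states satisfies w² = (∫_{λ₁}^{λ₂} y³/√((y² − λ₁²)(λ₂² − y²)(λ₃² − y²)) dy) / (∫_{λ₁}^{λ₂} y/√((y² − λ₁²)(λ₂² − y²)(λ₃² − y²)) dy) = λ₃² − (λ₃² − λ₁²)·E(m)/K(m). -/

import Mathlib

/-!
The substitution `y² = l1² + (l2² - l1²) sin² θ` maps `[0, π/2]` monotonically onto `[l1, l2]` and
turns `y dy / R̃(y)` into `dθ / (√C · √(1 - m sin² θ))`, where `C = l3² - l1²`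
(`integral_gap_substitution`). On the other hand `y² = l3² - C (1 - m sin² θ)`. Hence
`∫ y / R̃ = K(m) / √C` and `∫ y³ / R̃ = (l3² K(m) - C E(m)) / √C`, and the quotient of the two is
the claimed value, since `K(m) > 0` for `0 ≤ m < 1`.
-/

/-- The complete elliptic integral of the first kind, `K(m) = ∫₀^{π/2} dθ/√(1 - m sin²θ)`. -/
noncomputable def ellipticK (m : ℝ) : ℝ :=
  ∫ θ in (0:ℝ)..(Real.pi / 2), 1 / Real.sqrt (1 - m * Real.sin θ ^ 2)

/-- The complete elliptic integral of the second kind, `E(m) = ∫₀^{π/2} √(1 - m sin²θ) dθ`. -/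
noncomputable def ellipticE (m : ℝ) : ℝ :=
  ∫ θ in (0:ℝ)..(Real.pi / 2), Real.sqrt (1 - m * Real.sin θ ^ 2)

/-- For `0 ≤ m < 1` the radicand of the elliptic integrals never vanishes. -/
lemma one_sub_mul_sin_sq_pos {m : ℝ} (h0 : 0 ≤ m) (h1 : m < 1) (θ : ℝ) :
    0 < 1 - m * Real.sin θ ^ 2 := by
  nlinarith [Real.sin_sq_le_one θ, sq_nonneg (Real.sin θ)]

lemma continuous_ellipticK_integrand {m : ℝ} (h0 : 0 ≤ m) (h1 : m < 1) :
    Continuous fun θ : ℝ => 1 / Real.sqrt (1 - m * Real.sin θ ^ 2) :=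
  Continuous.div continuous_const (by fun_prop)
    fun θ => (Real.sqrt_pos.2 (one_sub_mul_sin_sq_pos h0 h1 θ)).ne'

lemma ellipticK_pos {m : ℝ} (h0 : 0 ≤ m) (h1 : m < 1) : 0 < ellipticK m :=
  intervalIntegral.intervalIntegral_pos_of_pos
    ((continuous_ellipticK_integrand h0 h1).intervalIntegrable _ _)
    (fun θ => one_div_pos.2 (Real.sqrt_pos.2 (one_sub_mul_sin_sq_pos h0 h1 θ)))
    Real.pi_div_two_pos

/-- The substitution `y = √(l1² + (l2² - l1²) sin² θ)` in the s-gap integral of `p(y²) y / R̃(y)`,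
for an arbitrary function `p`. The integrands agree on the open interval; no integrability is
needed because the change of variables for monotone maps holds unconditionally. -/
lemma integral_gap_substitution {l1 l2 l3 : ℝ} (h1 : 0 < l1) (h12 : l1 < l2) (h23 : l2 < l3)
    (p : ℝ → ℝ) :
    (∫ y in l1..l2, p (y ^ 2) * y /
        Real.sqrt ((y ^ 2 - l1 ^ 2) * (l2 ^ 2 - y ^ 2) * (l3 ^ 2 - y ^ 2))) =
      ∫ θ in (0:ℝ)..(Real.pi / 2), p (l1 ^ 2 + (l2 ^ 2 - l1 ^ 2) * Real.sin θ ^ 2) *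
        (1 / Real.sqrt (1 - (l2 ^ 2 - l1 ^ 2) / (l3 ^ 2 - l1 ^ 2) * Real.sin θ ^ 2)) /
          Real.sqrt (l3 ^ 2 - l1 ^ 2) := by
  have hd : 0 < l2 ^ 2 - l1 ^ 2 := by nlinarith
  have hC : 0 < l3 ^ 2 - l1 ^ 2 := by nlinarith
  have hdC : l2 ^ 2 - l1 ^ 2 < l3 ^ 2 - l1 ^ 2 := by nlinarith
  have hm0 : 0 ≤ (l2 ^ 2 - l1 ^ 2) / (l3 ^ 2 - l1 ^ 2) := by positivity
  have hm1 : (l2 ^ 2 - l1 ^ 2) / (l3 ^ 2 - l1 ^ 2) < 1 := (div_lt_one hC).2 hdC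
  have hmC : (l2 ^ 2 - l1 ^ 2) / (l3 ^ 2 - l1 ^ 2) * (l3 ^ 2 - l1 ^ 2) = l2 ^ 2 - l1 ^ 2 :=
    div_mul_cancel₀ _ hC.ne'
  set m := (l2 ^ 2 - l1 ^ 2) / (l3 ^ 2 - l1 ^ 2)
  set d := l2 ^ 2 - l1 ^ 2 with hd_def
  have hrad : ∀ θ : ℝ, 0 < l1 ^ 2 + d * Real.sin θ ^ 2 := fun θ => by positivity
  set f : ℝ → ℝ := fun θ => Real.sqrt (l1 ^ 2 + d * Real.sin θ ^ 2) with hf_def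
  have hf_pos : ∀ θ, 0 < f θ := fun θ => Real.sqrt_pos.2 (hrad θ)
  have hf_sq : ∀ θ, f θ ^ 2 = l1 ^ 2 + d * Real.sin θ ^ 2 := fun θ => Real.sq_sqrt (hrad θ).le
  have hf_zero : f 0 = l1 := by simp [hf_def, Real.sqrt_sq h1.le]
  have hf_end : f (Real.pi / 2) = l2 := by
    simp [hf_def, hd_def, Real.sqrt_sq (h1.trans h12).le]
  have hsc : ∀ θ ∈ Set.Ioo (0:ℝ) (Real.pi / 2), 0 < Real.sin θ ∧ 0 < Real.cos θ := fun θ hθ =>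
    ⟨Real.sin_pos_of_pos_of_lt_pi hθ.1 (by linarith [hθ.2, Real.pi_pos]),
      Real.cos_pos_of_mem_Ioo ⟨by linarith [hθ.1, Real.pi_pos], hθ.2⟩⟩
  have hIoo : Set.Ioo (min 0 (Real.pi / 2)) (max 0 (Real.pi / 2)) = Set.Ioo 0 (Real.pi / 2) := by
    rw [min_eq_left Real.pi_div_two_pos.le, max_eq_right Real.pi_div_two_pos.le]
  have hsubst := intervalIntegral.integral_comp_mul_deriv_of_deriv_nonneg
    (a := 0) (b := Real.pi / 2) (f := f) (f' := fun θ => d * (Real.sin θ * Real.cos θ) / f θ)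
    (g := fun y => p (y ^ 2) * y /
        Real.sqrt ((y ^ 2 - l1 ^ 2) * (l2 ^ 2 - y ^ 2) * (l3 ^ 2 - y ^ 2)))
    (by fun_prop)
    (fun θ _ => by
      have h := ((((Real.hasDerivAt_sin θ).pow 2).const_mul d).const_add (l1 ^ 2)).sqrt (hrad θ).ne'
      refine h.congr_deriv ?_
      have := (hf_pos θ).ne'
      change _ / (2 * f θ) = _
      field_simp
      simp
      ring)
    (fun θ hθ => by
      rw [hIoo] at hθ
      obtain ⟨hs, hc⟩ := hsc θ hθ
      have := hf_pos θ
      positivity)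
  rw [hf_zero, hf_end] at hsubst
  rw [← hsubst]
  apply intervalIntegral.integral_congr_Ioo_of_le Real.pi_div_two_pos.le
  intro θ hθ
  obtain ⟨hs, hc⟩ := hsc θ hθ
  have hq := one_sub_mul_sin_sq_pos hm0 hm1 θ
  have hR : (f θ ^ 2 - l1 ^ 2) * (l2 ^ 2 - f θ ^ 2) * (l3 ^ 2 - f θ ^ 2) =
      (d * (Real.sin θ * Real.cos θ)) ^ 2 *
        ((l3 ^ 2 - l1 ^ 2) * (1 - m * Real.sin θ ^ 2)) := by
    have e1 : f θ ^ 2 - l1 ^ 2 = d * Real.sin θ ^ 2 := by rw [hf_sq]; ring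
    have e2 : l2 ^ 2 - f θ ^ 2 = d * Real.cos θ ^ 2 := by
      rw [hf_sq, Real.cos_sq']; linarith
    have e3 : l3 ^ 2 - f θ ^ 2 = (l3 ^ 2 - l1 ^ 2) * (1 - m * Real.sin θ ^ 2) := by
      rw [hf_sq]; linear_combination Real.sin θ ^ 2 * hmC
    rw [e1, e2, e3]; ring
  have hf_ne := (hf_pos θ).ne'
  have hC_ne := (Real.sqrt_pos.2 hC).ne'
  have hq_ne := (Real.sqrt_pos.2 hq).ne'
  simp only [Function.comp_apply]
  rw [hR, Real.sqrt_mul (sq_nonneg _), Real.sqrt_sq (by positivity), Real.sqrt_mul hC.le, hf_sq]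
  field_simp

/-- Normalization constant of the genus-1 condensate density of states:
`w² = (∫_{λ₁}^{λ₂} y³/R̃ dy)/(∫_{λ₁}^{λ₂} y/R̃ dy) = λ₃² - (λ₃²-λ₁²)·E(m)/K(m)`,
with `m = (λ₂²-λ₁²)/(λ₃²-λ₁²)`. -/
theorem genus1_condensate_w_sq (l1 l2 l3 : ℝ)
    (h1 : 0 < l1) (h12 : l1 < l2) (h23 : l2 < l3) :
    (∫ y in l1..l2,
        y ^ 3 / Real.sqrt ((y ^ 2 - l1 ^ 2) * (l2 ^ 2 - y ^ 2) * (l3 ^ 2 - y ^ 2))) /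
      (∫ y in l1..l2,
        y / Real.sqrt ((y ^ 2 - l1 ^ 2) * (l2 ^ 2 - y ^ 2) * (l3 ^ 2 - y ^ 2))) =
      l3 ^ 2 - (l3 ^ 2 - l1 ^ 2) *
        (ellipticE ((l2 ^ 2 - l1 ^ 2) / (l3 ^ 2 - l1 ^ 2)) /
          ellipticK ((l2 ^ 2 - l1 ^ 2) / (l3 ^ 2 - l1 ^ 2))) := by
  have hd : 0 < l2 ^ 2 - l1 ^ 2 := by nlinarith
  have hC : 0 < l3 ^ 2 - l1 ^ 2 := by nlinarith
  have hm0 : 0 ≤ (l2 ^ 2 - l1 ^ 2) / (l3 ^ 2 - l1 ^ 2) := by positivity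
  have hm1 : (l2 ^ 2 - l1 ^ 2) / (l3 ^ 2 - l1 ^ 2) < 1 := (div_lt_one hC).2 (by nlinarith)
  have hmC : (l2 ^ 2 - l1 ^ 2) / (l3 ^ 2 - l1 ^ 2) * (l3 ^ 2 - l1 ^ 2) = l2 ^ 2 - l1 ^ 2 :=
    div_mul_cancel₀ _ hC.ne'
  have hden := integral_gap_substitution h1 h12 h23 fun _ => 1
  have hnum := integral_gap_substitution h1 h12 h23 fun u => u
  set m := (l2 ^ 2 - l1 ^ 2) / (l3 ^ 2 - l1 ^ 2)
  have hK := ellipticK_pos hm0 hm1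
  simp only [one_mul] at hden
  rw [intervalIntegral.integral_div, ← ellipticK] at hden
  -- `y² / √q = l3² / √q - C √q` with `q = 1 - m sin² θ`
  have hsplit : ∀ θ : ℝ, (l1 ^ 2 + (l2 ^ 2 - l1 ^ 2) * Real.sin θ ^ 2) *
      (1 / Real.sqrt (1 - m * Real.sin θ ^ 2)) =
      l3 ^ 2 * (1 / Real.sqrt (1 - m * Real.sin θ ^ 2)) -
        (l3 ^ 2 - l1 ^ 2) * Real.sqrt (1 - m * Real.sin θ ^ 2) := fun θ => by
    have hq := one_sub_mul_sin_sq_pos hm0 hm1 θ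
    have hq_ne := (Real.sqrt_pos.2 hq).ne'
    have hr := Real.sq_sqrt hq.le
    generalize Real.sqrt (1 - m * Real.sin θ ^ 2) = r at hq_ne hr ⊢
    field_simp
    linear_combination (l3 ^ 2 - l1 ^ 2) * hr - Real.sin θ ^ 2 * hmC
  have hpow : ∀ y : ℝ, y ^ 2 * y = y ^ 3 := fun y => by ring
  simp only [hsplit, hpow] at hnum
  rw [intervalIntegral.integral_div, intervalIntegral.integral_sub
      (((continuous_ellipticK_integrand hm0 hm1).const_mul _).intervalIntegrable _ _)
      (Continuous.intervalIntegrable (by fun_prop) _ _),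
    intervalIntegral.integral_const_mul, intervalIntegral.integral_const_mul,
    ← ellipticK, ← ellipticE] at hnum
  rw [hnum, hden]
  have hC_ne := (Real.sqrt_pos.2 hC).ne'
  field_simp
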